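/- Let p ∈ [1,∞). Let m and m′ be Borel probability measures on ℝ with CDFs F and G, and for n ≥ 1 let (x₁(n),…,x_n(n)) and (y₁(n),…,y_n(n)) be their discretisations of order n, i.e. x_k(n) := (n+1) ∫_{(2k−1)/(2(n+1))}^{(2k+1)/(2(n+1))} F⁻¹(w) dw and y_k(n) := (n+1) ∫_{(2k−1)/(2(n+1))}^{(2k+1)/(2(n+1))} G⁻¹(w) dw. Then lim_{n→∞} (1/n) Σ_{k=1}^n |x_k(n) − y_k(n)|^p = ∫₀¹ |F⁻¹(v) − G⁻¹(v)|^p dv, where the limit is taken in [0,+∞] (both sides may be infinite). -/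

import Mathlib

/-!
Write `h = F⁻¹ - G⁻¹`, which is locally integrable on `(0, 1)`. Then `x_k(n) - y_k(n)` is the
average of `h` over the `k`-th of `n` disjoint cells of length `1 / (n + 1)` contained in `(0, 1)`.
So up to the factor `(n + 1) / n → 1` the sum in question is `∫ |hₙ|^p`, where `hₙ` is the step
function equal to these averages on the cells. Jensen's inequality on each cell gives
`∫ |hₙ|^p ≤ ∫₀¹ |h|^p` for every `n`, and `hₙ → h` almost everywhere by Lebesgue differentiation, so
Fatou's lemma gives `∫₀¹ |h|^p ≤ liminf ∫ |hₙ|^p`. Both bounds hold in `[0, ∞]`.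
-/

open MeasureTheory Filter Set

noncomputable section

/-- The pseudo-inverse `F⁻¹(v) = inf {x | v ≤ F x}` of a CDF. -/
def cdfInv (F : ℝ → ℝ) (v : ℝ) : ℝ := sInf {x : ℝ | v ≤ F x}

open Metric Topology
open scoped ENNReal

section Average

variable {α E : Type*} [MeasurableSpace α] [NormedAddCommGroup E] [NormedSpace ℝ E]
  {μ : Measure α} {f : α → E} {p : ℝ}

lemma enorm_integral_rpow_le_lintegral [IsProbabilityMeasure μ] (hp : 1 ≤ p) :
    ‖∫ x, f x ∂μ‖ₑ ^ p ≤ ∫⁻ x, ‖f x‖ₑ ^ p ∂μ := by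
  have hp₀ : 0 < p := zero_lt_one.trans_le hp
  by_cases hf : Integrable f μ
  · have h_norm : ‖∫ x, f x ∂μ‖ₑ ≤ eLpNorm f (ENNReal.ofReal p) μ := calc
      ‖∫ x, f x ∂μ‖ₑ ≤ ∫⁻ x, ‖f x‖ₑ ∂μ := enorm_integral_le_lintegral_enorm f
      _ = eLpNorm f 1 μ := eLpNorm_one_eq_lintegral_enorm.symm
      _ ≤ eLpNorm f (ENNReal.ofReal p) μ :=
        eLpNorm_le_eLpNorm_of_exponent_le (by simpa using hp) hf.aestronglyMeasurable
    rwa [eLpNorm_eq_lintegral_rpow_enorm_toReal (by simpa using hp₀) ENNReal.ofReal_ne_top,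
      ENNReal.toReal_ofReal hp₀.le, one_div, ENNReal.le_rpow_inv_iff hp₀] at h_norm
  · simp [integral_undef hf, hp₀]

lemma enorm_average_rpow_le_laverage (hp : 1 ≤ p) :
    ‖⨍ x, f x ∂μ‖ₑ ^ p ≤ ⨍⁻ x, ‖f x‖ₑ ^ p ∂μ := by
  have hp₀ : 0 < p := zero_lt_one.trans_le hp
  by_cases h_fin : IsFiniteMeasure μ
  · rcases eq_zero_or_neZero μ with rfl | h_ne
    · simp [hp₀]
    · exact enorm_integral_rpow_le_lintegral hp
  · have h_top : μ univ = ∞ := not_isFiniteMeasure_iff.1 h_fin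
    simp [average_eq', h_top, hp₀]

end Average

section Fatou

variable {α : Type*} [MeasurableSpace α] {μ ν : Measure α}

lemma tendsto_lintegral_of_ae_tendsto_of_le {F : ℕ → α → ℝ≥0∞} {f : α → ℝ≥0∞} (hνμ : ν ≤ μ)
    (hF : ∀ n, AEMeasurable (F n) ν) (h_lim : ∀ᵐ x ∂ν, Tendsto (F · x) atTop (𝓝 (f x)))
    (h_le : ∀ n, ∫⁻ x, F n x ∂μ ≤ ∫⁻ x, f x ∂ν) :
    Tendsto (fun n => ∫⁻ x, F n x ∂μ) atTop (𝓝 (∫⁻ x, f x ∂ν)) := by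
  refine tendsto_of_le_liminf_of_limsup_le ?_
    (limsup_le_of_le (h := Eventually.of_forall h_le))
  calc ∫⁻ x, f x ∂ν
      = ∫⁻ x, liminf (F · x) atTop ∂ν :=
        lintegral_congr_ae (h_lim.mono fun _ hx => hx.liminf_eq.symm)
    _ ≤ liminf (fun n => ∫⁻ x, F n x ∂ν) atTop := lintegral_liminf_le' hF
    _ ≤ liminf (fun n => ∫⁻ x, F n x ∂μ) atTop :=
        liminf_le_liminf (Eventually.of_forall fun _ => lintegral_mono' hνμ le_rfl)

end Fatou

section StepAverage

variable {α E ι : Type*} [MeasurableSpace α] [NormedAddCommGroup E] [NormedSpace ℝ E]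
  {μ : Measure α} {s : ι → Set α} {t : Finset ι} {f : α → E} {p : ℝ}

/-- The step function which on each set `s i`, `i ∈ t`, is the average of `f` over `s i`, and which
vanishes outside these sets. The `s i` are meant to be disjoint: the averages add up on
overlaps. -/
def stepAverage (μ : Measure α) (s : ι → Set α) (t : Finset ι) (f : α → E) (x : α) : E :=
  ∑ i ∈ t, (s i).indicator (fun _ => ⨍ y in s i, f y ∂μ) x

lemma stronglyMeasurable_stepAverage (hs : ∀ i ∈ t, MeasurableSet (s i)) :
    StronglyMeasurable (stepAverage μ s t f) :=
  Finset.stronglyMeasurable_fun_sum t fun i hi => stronglyMeasurable_const.indicator (hs i hi)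

lemma stepAverage_of_mem (h_disj : (t : Set ι).PairwiseDisjoint s) {i : ι} (hi : i ∈ t) {x : α}
    (hx : x ∈ s i) : stepAverage μ s t f x = ⨍ y in s i, f y ∂μ := by
  rw [stepAverage, Finset.sum_eq_single_of_mem i hi, indicator_of_mem hx]
  intro j hj hji
  exact indicator_of_notMem (disjoint_right.1 (h_disj hj hi hji) hx) _

lemma enorm_stepAverage_rpow (hp : 0 < p) (h_disj : (t : Set ι).PairwiseDisjoint s) (x : α) :
    ‖stepAverage μ s t f x‖ₑ ^ p =
      ∑ i ∈ t, (s i).indicator (fun _ => ‖⨍ y in s i, f y ∂μ‖ₑ ^ p) x := by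
  by_cases hx : ∃ i ∈ t, x ∈ s i
  · obtain ⟨i, hi, hxi⟩ := hx
    rw [stepAverage_of_mem h_disj hi hxi, Finset.sum_eq_single_of_mem i hi, indicator_of_mem hxi]
    intro j hj hji
    exact indicator_of_notMem (disjoint_right.1 (h_disj hj hi hji) hxi) _
  · push Not at hx
    rw [stepAverage, Finset.sum_eq_zero fun i hi => indicator_of_notMem (hx i hi) _,
      Finset.sum_eq_zero fun i hi => indicator_of_notMem (hx i hi) _, enorm_zero,
      ENNReal.zero_rpow_of_pos hp]

lemma lintegral_enorm_stepAverage_rpow (hp : 0 < p) (hs : ∀ i ∈ t, MeasurableSet (s i))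
    (h_disj : (t : Set ι).PairwiseDisjoint s) :
    ∫⁻ x, ‖stepAverage μ s t f x‖ₑ ^ p ∂μ = ∑ i ∈ t, μ (s i) * ‖⨍ y in s i, f y ∂μ‖ₑ ^ p := by
  simp_rw [enorm_stepAverage_rpow hp h_disj]
  rw [lintegral_finsetSum' t fun i hi => (measurable_const.indicator (hs i hi)).aemeasurable]
  refine Finset.sum_congr rfl fun i hi => ?_
  rw [lintegral_indicator_const (hs i hi), mul_comm]

lemma lintegral_enorm_stepAverage_rpow_le (hp : 1 ≤ p) (hs : ∀ i ∈ t, MeasurableSet (s i))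
    (hμ : ∀ i ∈ t, μ (s i) ≠ ∞) (h_disj : (t : Set ι).PairwiseDisjoint s) :
    ∫⁻ x, ‖stepAverage μ s t f x‖ₑ ^ p ∂μ ≤ ∫⁻ x in ⋃ i ∈ t, s i, ‖f x‖ₑ ^ p ∂μ := calc
  ∫⁻ x, ‖stepAverage μ s t f x‖ₑ ^ p ∂μ
    = ∑ i ∈ t, μ (s i) * ‖⨍ y in s i, f y ∂μ‖ₑ ^ p :=
      lintegral_enorm_stepAverage_rpow (zero_lt_one.trans_le hp) hs h_disj
  _ ≤ ∑ i ∈ t, μ (s i) * ⨍⁻ y in s i, ‖f y‖ₑ ^ p ∂μ := by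
      gcongr
      exact enorm_average_rpow_le_laverage hp
  _ = ∑ i ∈ t, ∫⁻ y in s i, ‖f y‖ₑ ^ p ∂μ :=
      Finset.sum_congr rfl fun i hi => measure_mul_setLAverage _ (hμ i hi)
  _ = ∫⁻ x in ⋃ i ∈ t, s i, ‖f x‖ₑ ^ p ∂μ := (lintegral_biUnion_finset h_disj hs _).symm

end StepAverage

section LebesgueDifferentiation

variable {E : Type*} [NormedAddCommGroup E] [NormedSpace ℝ E] [CompleteSpace E]

lemma ae_restrict_tendsto_average_filterAt {X : Type*} [PseudoMetricSpace X]
    [SecondCountableTopology X] [MeasurableSpace X] [BorelSpace X] {μ : Measure X}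
    [IsLocallyFiniteMeasure μ] (v : VitaliFamily μ) {f : X → E} {U : Set X} (hU : IsOpen U)
    (hf : LocallyIntegrableOn f U μ) :
    ∀ᵐ x ∂μ.restrict U, Tendsto (fun a => ⨍ y in a, f y ∂μ) (v.filterAt x) (𝓝 (f x)) := by
  obtain ⟨u, hu_open, hU_sub, hfu⟩ := hf.exists_nat_integrableOn
  have h_indicator : ∀ n, ∀ᵐ x ∂μ, Tendsto (fun a => ⨍ y in a, (u n ∩ U).indicator f y ∂μ)
      (v.filterAt x) (𝓝 ((u n ∩ U).indicator f x)) := fun n =>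
    v.ae_tendsto_average
      ((hfu n).integrable_indicator ((hu_open n).inter hU).measurableSet).locallyIntegrable
  rw [ae_restrict_iff' hU.measurableSet]
  filter_upwards [ae_all_iff.2 h_indicator] with x hx hxU
  obtain ⟨n, hn⟩ := mem_iUnion.1 (hU_sub hxU)
  have h_nhds : u n ∩ U ∈ 𝓝 x := ((hu_open n).inter hU).mem_nhds ⟨hn, hxU⟩
  rw [← indicator_of_mem (mem_of_mem_nhds h_nhds) f]
  refine (hx n).congr' ?_
  filter_upwards [v.eventually_filterAt_subset_of_nhds h_nhds,
    v.eventually_filterAt_measurableSet x] with a ha ha_meas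
  exact setAverage_congr_fun ha_meas (ae_of_all _ fun y hy => indicator_of_mem (ha hy) f)

lemma ae_restrict_tendsto_average_Ioc {f : ℝ → E} {U : Set ℝ} (hU : IsOpen U)
    (hf : LocallyIntegrableOn f U) :
    ∀ᵐ v ∂volume.restrict U, ∀ {ι : Type*} {l : Filter ι} (a b : ι → ℝ),
      (∀ᶠ i in l, v ∈ Ioc (a i) (b i)) → Tendsto (fun i => b i - a i) l (𝓝 0) →
        Tendsto (fun i => ⨍ w in Ioc (a i) (b i), f w) l (𝓝 (f v)) := by
  filter_upwards [ae_restrict_tendsto_average_filterAt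
    (IsUnifLocDoublingMeasure.vitaliFamily volume 1) hU hf] with v hv ι l a b h_mem h_length
  have h_radius : Tendsto (fun i => (b i - a i) / 2) l (𝓝[>] 0) := by
    refine tendsto_nhdsWithin_iff.2 ⟨by simpa using h_length.div_const 2, ?_⟩
    filter_upwards [h_mem] with i hi
    exact half_pos (sub_pos.2 (hi.1.trans_le hi.2))
  have h_ball : Tendsto (fun i => closedBall ((a i + b i) / 2) ((b i - a i) / 2)) l
      ((IsUnifLocDoublingMeasure.vitaliFamily volume 1).filterAt v) := by
    refine IsUnifLocDoublingMeasure.tendsto_closedBall_filterAt volume _ _ h_radius ?_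
    filter_upwards [h_mem] with i hi
    rw [one_mul, ← Real.Icc_eq_closedBall]
    exact Ioc_subset_Icc_self hi
  refine (hv.comp h_ball).congr fun i => ?_
  rw [Function.comp_apply, ← Real.Icc_eq_closedBall, setAverage_congr Ioc_ae_eq_Icc]

end LebesgueDifferentiation

section Cell

/-- The left endpoint of the `k`-th cell of the discretisation of order `n`. -/
def cellLeft (n k : ℕ) : ℝ := (2 * (k : ℝ) - 1) / (2 * ((n : ℝ) + 1))

/-- The right endpoint of the `k`-th cell of the discretisation of order `n`. -/
def cellRight (n k : ℕ) : ℝ := (2 * (k : ℝ) + 1) / (2 * ((n : ℝ) + 1))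

/-- The `k`-th cell of the discretisation of order `n`: the interval of length `1 / (n + 1)` centred
at `k / (n + 1)`, over which `cdfInv F` is averaged to obtain `x_k(n)`. It is half-open so that
distinct cells are disjoint. -/
def cell (n k : ℕ) : Set ℝ := Ioc (cellLeft n k) (cellRight n k)

lemma cellRight_sub_cellLeft (n k : ℕ) :
    cellRight n k - cellLeft n k = 1 / ((n : ℝ) + 1) := by
  rw [cellRight, cellLeft]
  field_simp
  ring

lemma cellLeft_le_cellRight (n k : ℕ) : cellLeft n k ≤ cellRight n k := by
  rw [← sub_nonneg, cellRight_sub_cellLeft]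
  positivity

lemma cellLeft_succ (n k : ℕ) : cellLeft n (k + 1) = cellRight n k := by
  rw [cellLeft, cellRight, Nat.cast_succ]
  ring

lemma measurableSet_cell (n k : ℕ) : MeasurableSet (cell n k) := measurableSet_Ioc

lemma volume_cell (n k : ℕ) : volume (cell n k) = ENNReal.ofReal (1 / ((n : ℝ) + 1)) := by
  rw [cell, Real.volume_Ioc, cellRight_sub_cellLeft]

lemma pairwise_disjoint_cell (n : ℕ) : Pairwise (Function.onFun Disjoint (cell n)) := by
  have h_mono : Monotone (cellLeft n) := monotone_nat_of_le_succ fun k =>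
    (cellLeft_le_cellRight n k).trans_eq (cellLeft_succ n k).symm
  simpa only [Order.succ_eq_add_one, cellLeft_succ] using! h_mono.pairwise_disjoint_on_Ioc_succ

lemma Icc_cellLeft_cellRight_subset_Ioo {n k : ℕ} (hk : k ∈ Finset.Icc 1 n) :
    Icc (cellLeft n k) (cellRight n k) ⊆ Ioo 0 1 := by
  obtain ⟨hk₁, hkn⟩ := Finset.mem_Icc.1 hk
  have hk₁' : (1 : ℝ) ≤ k := mod_cast hk₁
  have hkn' : (k : ℝ) ≤ n := mod_cast hkn
  refine Icc_subset_Ioo (div_pos (by linarith) (by positivity)) ?_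
  rw [cellRight, div_lt_one (by positivity)]
  linarith

lemma biUnion_cell_subset_Ioo (n : ℕ) : ⋃ k ∈ Finset.Icc 1 n, cell n k ⊆ Ioo 0 1 :=
  iUnion₂_subset fun _ hk => Ioc_subset_Icc_self.trans (Icc_cellLeft_cellRight_subset_Ioo hk)

lemma eventually_exists_mem_cell {v : ℝ} (hv : v ∈ Ioo (0 : ℝ) 1) :
    ∀ᶠ n : ℕ in atTop, ∃ k ∈ Finset.Icc 1 n, v ∈ cell n k := by
  have h_atTop : Tendsto (fun n : ℕ => (n : ℝ) + 1) atTop atTop :=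
    tendsto_atTop_add_const_right _ _ tendsto_natCast_atTop_atTop
  filter_upwards [h_atTop.eventually_gt_atTop (1 / v), h_atTop.eventually_gt_atTop (1 / (1 - v))]
    with n h_left h_right
  rw [div_lt_iff₀ hv.1] at h_left
  rw [div_lt_iff₀ (sub_pos.2 hv.2)] at h_right
  have h_ceil_lt := Nat.ceil_lt_add_one (a := ((n : ℝ) + 1) * v - 1 / 2) (by linarith)
  have h_le_ceil := Nat.le_ceil (((n : ℝ) + 1) * v - 1 / 2)
  refine ⟨⌈((n : ℝ) + 1) * v - 1 / 2⌉₊, Finset.mem_Icc.2 ⟨?_, ?_⟩, ?_, ?_⟩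
  · rw [Nat.one_le_ceil_iff]
    linarith
  · rw [Nat.ceil_le]
    linarith
  · rw [cellLeft, div_lt_iff₀ (by positivity)]
    linarith
  · rw [cellRight, le_div_iff₀ (by positivity)]
    linarith

lemma intervalIntegrable_cell {E : Type*} [NormedAddCommGroup E] {f : ℝ → E}
    (hf : LocallyIntegrableOn f (Ioo 0 1)) {n k : ℕ} (hk : k ∈ Finset.Icc 1 n) :
    IntervalIntegrable f volume (cellLeft n k) (cellRight n k) := by
  rw [intervalIntegrable_iff_integrableOn_Icc_of_le (cellLeft_le_cellRight n k)]
  exact hf.integrableOn_compact_subset (Icc_cellLeft_cellRight_subset_Ioo hk) isCompact_Icc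

variable {E : Type*} [NormedAddCommGroup E] [NormedSpace ℝ E]

lemma setAverage_cell (f : ℝ → E) (n k : ℕ) :
    ⨍ w in cell n k, f w = ((n : ℝ) + 1) • ∫ w in cellLeft n k..cellRight n k, f w := by
  rw [cell, ← uIoc_of_le (cellLeft_le_cellRight n k), interval_average_eq, cellRight_sub_cellLeft,
    one_div, inv_inv]

lemma ofReal_mean_norm_setAverage_cell_rpow {p : ℝ} (hp : 0 < p) (f : ℝ → E) (n : ℕ) :
    ENNReal.ofReal ((1 / (n : ℝ)) * ∑ k ∈ Finset.Icc 1 n, ‖⨍ w in cell n k, f w‖ ^ p) =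
      ENNReal.ofReal (((n : ℝ) + 1) / n) *
        ∫⁻ v, ‖stepAverage volume (cell n) (Finset.Icc 1 n) f v‖ₑ ^ p := by
  rw [lintegral_enorm_stepAverage_rpow hp (fun k _ => measurableSet_cell n k)
    ((pairwise_disjoint_cell n).set_pairwise _)]
  simp_rw [volume_cell]
  rw [← Finset.mul_sum, ← mul_assoc, ← ENNReal.ofReal_mul (by positivity),
    ENNReal.ofReal_mul (by positivity), ENNReal.ofReal_sum_of_nonneg fun _ _ => by positivity]
  simp_rw [← ENNReal.ofReal_rpow_of_nonneg (norm_nonneg _) hp.le, ofReal_norm]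
  congr 2
  field_simp

end Cell

section Discretisation

variable {E : Type*} [NormedAddCommGroup E] [NormedSpace ℝ E] [CompleteSpace E] {f : ℝ → E} {p : ℝ}

lemma ae_tendsto_stepAverage_cell (hf : LocallyIntegrableOn f (Ioo 0 1)) :
    ∀ᵐ v ∂volume.restrict (Ioo 0 1), Tendsto
      (fun n => stepAverage volume (cell n) (Finset.Icc 1 n) f v) atTop (𝓝 (f v)) := by
  filter_upwards [ae_restrict_tendsto_average_Ioc isOpen_Ioo hf, ae_restrict_mem measurableSet_Ioo]
    with v h_lebesgue hv
  obtain ⟨k, hk⟩ := (eventually_exists_mem_cell hv).choice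
  have h_average : Tendsto (fun n => ⨍ w in cell n (k n), f w) atTop (𝓝 (f v)) := by
    refine h_lebesgue _ _ (hk.mono fun _ h => h.2) ?_
    simp_rw [cellRight_sub_cellLeft]
    exact tendsto_one_div_add_atTop_nhds_zero_nat
  refine h_average.congr' ?_
  filter_upwards [hk] with n hn
  exact (stepAverage_of_mem ((pairwise_disjoint_cell n).set_pairwise _) hn.1 hn.2).symm

lemma tendsto_lintegral_enorm_stepAverage_cell_rpow (hp : 1 ≤ p)
    (hf : LocallyIntegrableOn f (Ioo 0 1)) :
    Tendsto (fun n => ∫⁻ v, ‖stepAverage volume (cell n) (Finset.Icc 1 n) f v‖ₑ ^ p) atTop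
      (𝓝 (∫⁻ v in Ioo 0 1, ‖f v‖ₑ ^ p)) := by
  refine tendsto_lintegral_of_ae_tendsto_of_le Measure.restrict_le_self (fun n => ?_) ?_
    fun n => ?_
  · exact ((stronglyMeasurable_stepAverage fun k _ =>
      measurableSet_cell n k).enorm.pow_const p).aemeasurable
  · filter_upwards [ae_tendsto_stepAverage_cell hf] with v hv
    exact (ENNReal.continuous_rpow_const.tendsto _).comp hv.enorm
  · calc ∫⁻ v, ‖stepAverage volume (cell n) (Finset.Icc 1 n) f v‖ₑ ^ p
        ≤ ∫⁻ v in ⋃ k ∈ Finset.Icc 1 n, cell n k, ‖f v‖ₑ ^ p :=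
          lintegral_enorm_stepAverage_rpow_le hp (fun k _ => measurableSet_cell n k)
            (fun k _ => measure_Ioc_lt_top.ne) ((pairwise_disjoint_cell n).set_pairwise _)
      _ ≤ ∫⁻ v in Ioo 0 1, ‖f v‖ₑ ^ p := lintegral_mono_set (biUnion_cell_subset_Ioo n)

lemma tendsto_mean_norm_setAverage_cell_rpow (hp : 1 ≤ p) (hf : LocallyIntegrableOn f (Ioo 0 1)) :
    Tendsto (fun n : ℕ => ENNReal.ofReal
        ((1 / (n : ℝ)) * ∑ k ∈ Finset.Icc 1 n, ‖⨍ w in cell n k, f w‖ ^ p)) atTop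
      (𝓝 (∫⁻ v in Ioo 0 1, ENNReal.ofReal (‖f v‖ ^ p))) := by
  have hp₀ : 0 < p := zero_lt_one.trans_le hp
  have h_factor : Tendsto (fun n : ℕ => ENNReal.ofReal (((n : ℝ) + 1) / n)) atTop (𝓝 1) := by
    simpa [add_comm] using
      ENNReal.tendsto_ofReal (tendsto_add_mul_div_add_mul_atTop_nhds (1 : ℝ) 0 1 one_ne_zero)
  simp_rw [ofReal_mean_norm_setAverage_cell_rpow hp₀,
    ← ENNReal.ofReal_rpow_of_nonneg (norm_nonneg _) hp₀.le, ofReal_norm]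
  simpa using ENNReal.Tendsto.mul h_factor (Or.inl one_ne_zero)
    (tendsto_lintegral_enorm_stepAverage_cell_rpow hp hf) (Or.inr ENNReal.one_ne_top)

theorem discretisation_wasserstein_limit_general {f g : ℝ → E} (hp : 1 ≤ p)
    (hf : LocallyIntegrableOn f (Ioo 0 1)) (hg : LocallyIntegrableOn g (Ioo 0 1))
    {x y : ℕ → ℕ → E}
    (hx : ∀ n k : ℕ, 1 ≤ k → k ≤ n →
      x n k = ((n : ℝ) + 1) •
        ∫ w in ((2 * (k : ℝ) - 1) / (2 * ((n : ℝ) + 1)))..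
            ((2 * (k : ℝ) + 1) / (2 * ((n : ℝ) + 1))), f w)
    (hy : ∀ n k : ℕ, 1 ≤ k → k ≤ n →
      y n k = ((n : ℝ) + 1) •
        ∫ w in ((2 * (k : ℝ) - 1) / (2 * ((n : ℝ) + 1)))..
            ((2 * (k : ℝ) + 1) / (2 * ((n : ℝ) + 1))), g w) :
    Tendsto
      (fun n : ℕ =>
        ENNReal.ofReal ((1 / (n : ℝ)) * ∑ k ∈ Finset.Icc 1 n, ‖x n k - y n k‖ ^ p))
      atTop (𝓝 (∫⁻ v in Ioo 0 1, ENNReal.ofReal (‖f v - g v‖ ^ p))) := by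
  have h_average (n k : ℕ) (hk : k ∈ Finset.Icc 1 n) :
      x n k - y n k = ⨍ w in cell n k, (f - g) w := by
    obtain ⟨hk₁, hkn⟩ := Finset.mem_Icc.1 hk
    calc x n k - y n k
        = ((n : ℝ) + 1) • (∫ w in cellLeft n k..cellRight n k, f w) -
            ((n : ℝ) + 1) • ∫ w in cellLeft n k..cellRight n k, g w :=
          congrArg₂ (· - ·) (hx n k hk₁ hkn) (hy n k hk₁ hkn)
      _ = ((n : ℝ) + 1) • ∫ w in cellLeft n k..cellRight n k, (f - g) w := by
          rw [← smul_sub, ← intervalIntegral.integral_sub (intervalIntegrable_cell hf hk)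
            (intervalIntegrable_cell hg hk)]
          rfl
      _ = ⨍ w in cell n k, (f - g) w := (setAverage_cell _ n k).symm
  refine (tendsto_mean_norm_setAverage_cell_rpow hp (hf.sub hg)).congr fun n => ?_
  congr 2
  exact Finset.sum_congr rfl fun k hk => by rw [h_average n k hk]

end Discretisation

section CdfInv

lemma monotoneOn_cdfInv {F : ℝ → ℝ} {a b : ℝ} (h_bot : Tendsto F atBot (𝓝 a))
    (h_top : Tendsto F atTop (𝓝 b)) : MonotoneOn (cdfInv F) (Ioo a b) := by
  intro u hu v hv huv
  have h_bdd : BddBelow {x | u ≤ F x} := by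
    obtain ⟨c, hc⟩ := eventually_atBot.1 (h_bot.eventually_lt_const hu.1)
    exact ⟨c, fun x hx => le_of_not_ge fun hxc => (hc x hxc).not_ge hx⟩
  have h_nonempty : {x | v ≤ F x}.Nonempty := (h_top.eventually_const_le hv.2).exists
  exact csInf_le_csInf h_bdd h_nonempty fun x hx => huv.trans hx

lemma locallyIntegrableOn_cdfInv {m : Measure ℝ} [IsProbabilityMeasure m] {F : ℝ → ℝ}
    (hF : ∀ x : ℝ, F x = (m (Iic x)).toReal) : LocallyIntegrableOn (cdfInv F) (Ioo 0 1) := by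
  obtain rfl : F = ProbabilityTheory.cdf m := funext fun x => by
    rw [hF, ProbabilityTheory.cdf_eq_real, measureReal_def]
  have h_mono : MonotoneOn (cdfInv (ProbabilityTheory.cdf m)) (Ioo 0 1) :=
    monotoneOn_cdfInv (ProbabilityTheory.tendsto_cdf_atBot m)
      (ProbabilityTheory.tendsto_cdf_atTop m)
  rw [locallyIntegrableOn_iff isOpen_Ioo.isLocallyClosed]
  exact fun K hK hK_compact => (h_mono.mono hK).integrableOn_isCompact hK_compact

end CdfInv

/-- **Wasserstein convergence of the discretisation**: if `x(n)` and `y(n)` are the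
order-`n` discretisations of `m` and `m′`, then
`(1/n) Σ_{k=1}^n |x_k(n) − y_k(n)|^p → ∫₀¹ |F⁻¹(v) − G⁻¹(v)|^p dv` in `[0,∞]`. -/
theorem discretisation_wasserstein_limit (p : ℝ) (hp : 1 ≤ p)
    (m m' : Measure ℝ) [IsProbabilityMeasure m] [IsProbabilityMeasure m']
    (F G : ℝ → ℝ)
    (hF : ∀ x : ℝ, F x = (m (Iic x)).toReal)
    (hG : ∀ x : ℝ, G x = (m' (Iic x)).toReal)
    (x y : ℕ → ℕ → ℝ)
    (hx : ∀ n k : ℕ, 1 ≤ k → k ≤ n →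
      x n k = ((n : ℝ) + 1) *
        ∫ w in ((2 * (k : ℝ) - 1) / (2 * ((n : ℝ) + 1)))..
            ((2 * (k : ℝ) + 1) / (2 * ((n : ℝ) + 1))), cdfInv F w)
    (hy : ∀ n k : ℕ, 1 ≤ k → k ≤ n →
      y n k = ((n : ℝ) + 1) *
        ∫ w in ((2 * (k : ℝ) - 1) / (2 * ((n : ℝ) + 1)))..
            ((2 * (k : ℝ) + 1) / (2 * ((n : ℝ) + 1))), cdfInv G w) :
    Tendsto
      (fun n : ℕ =>
        ENNReal.ofReal ((1 / (n : ℝ)) * ∑ k ∈ Finset.Icc 1 n, |x n k - y n k| ^ p))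
      atTop
      (nhds (∫⁻ v in Ioo (0:ℝ) 1, ENNReal.ofReal (|cdfInv F v - cdfInv G v| ^ p))) :=
  discretisation_wasserstein_limit_general hp (locallyIntegrableOn_cdfInv hF)
    (locallyIntegrableOn_cdfInv hG) hx hy
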